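/- Let X be a finite non-degenerate indecomposable cycle set with |X| = p₁^{α₁} ⋯ p_n^{α_n}, where p₁, …, p_n are pairwise distinct primes. Suppose the associated permutation group G(X) carries a left brace structure (G(X), +, ∘) whose multiplicative operation ∘ is composition of permutations and which satisfies λ_g(σ_x⁻¹) = σ_{g(x)}⁻¹ for all g ∈ G(X) and x ∈ X (this is the permutation left brace of X), and suppose the additive group (G(X), +) is cyclic. Then fpl(X) = α₁ + ⋯ + α_n. -/

import Mathlib

/-!
The upper bound holds for every indecomposable cycle set: `G(X)` permutes the fibres of an
epimorphism transitively, so the sizes along a chain are proper divisors of one another and a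
chain has at most `Ω(|X|)` terms (`HasChain.le_cardFactors`).

For the lower bound, identify `(G(X), +)` with `ℤ/N`. Every `λ_x` is then multiplication by a
unit `v x`, so `x ∘ y = x + v x * y` (`exists_units`). All `σ_x⁻¹` are unit multiples of one
residue, which must therefore generate `ℤ/N`. Hence an element fixing a point `x₀` acts trivially
through `λ`, that is, the stabiliser of `x₀` lies in the socle. There every additive subgroup is a
normal subgroup, so the stabiliser, being core-free, is trivial. Thus `G(X)` acts regularly,
`|X| = N`, and `X` is isomorphic to the cycle set `ofUnits` on `ℤ/N` (`exists_ofUnits`).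

The map `v` from `ℤ/N` to its units cannot be injective when `N > 1`, since `0` is not a unit, so
the socle is nonzero and contains the additive subgroup of some prime order `p`
(`exists_prime_period`). Then `v` is periodic modulo `N / p`, and the whole structure descends
to `ℤ/(N / p)` (`exists_quotient`). Repeating this until the size is prime, where transitivity
implies primitivity, gives a chain of length `Ω(N)` (`hasChain_ofUnits`).
-/

/-- A cycle set: each left multiplication `σ_x = op x` is bijective and
`(x·y)·(x·z) = (y·x)·(y·z)`. -/
structure CycleSet (X : Type) where
  op : X → X → X
  bij : ∀ x, Function.Bijective (op x)
  cyc : ∀ x y z, op (op x y) (op x z) = op (op y x) (op y z)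

namespace CycleSet

variable {X Y : Type}

/-- The left multiplication `σ_x` as a permutation of `X`. -/
noncomputable def sigma (C : CycleSet X) (x : X) : Equiv.Perm X :=
  Equiv.ofBijective _ (C.bij x)

/-- Non-degeneracy: the squaring map `x ↦ x·x` is bijective. -/
def Nondeg (C : CycleSet X) : Prop := Function.Bijective fun x => C.op x x

/-- The associated permutation group `G(X)`, generated by the `σ_x`. -/
noncomputable def G (C : CycleSet X) : Subgroup (Equiv.Perm X) :=
  Subgroup.closure (Set.range C.sigma)

/-- The displacement group `Dis(X)`, generated by the `σ_x σ_y⁻¹`. -/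
noncomputable def Dis (C : CycleSet X) : Subgroup (Equiv.Perm X) :=
  Subgroup.closure {g | ∃ x y, g = C.sigma x * (C.sigma y)⁻¹}

/-- A subgroup of `Sym(X)` acts transitively on `X`. -/
def SubgroupTransitive (H : Subgroup (Equiv.Perm X)) : Prop :=
  ∀ a b : X, ∃ g ∈ H, g a = b

/-- Indecomposability: `G(X)` acts transitively on `X`. -/
def Indec (C : CycleSet X) : Prop := SubgroupTransitive C.G

/-- A trivial cycle set: all left multiplications coincide. -/
def IsTrivial (C : CycleSet X) : Prop := ∀ x y z, C.op x z = C.op y z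

/-- Cycle set homomorphism. -/
def IsHom (C : CycleSet X) (D : CycleSet Y) (f : X → Y) : Prop :=
  ∀ a b : X, f (C.op a b) = D.op (f a) (f b)

/-- A block for the action of `G(X)` on `X`. -/
def IsBlock (C : CycleSet X) (s : Set X) : Prop :=
  ∀ g ∈ C.G, (⇑g '' s = s ∨ Disjoint (⇑g '' s) s)

/-- Primitivity: `G(X)` acts transitively on `X` and all blocks are trivial. -/
def Primitive (C : CycleSet X) : Prop :=
  C.Indec ∧ ∀ s : Set X, C.IsBlock s → s.Subsingleton ∨ s = Set.univ

/-- There is a chain `X = X₁ → X₂ → ⋯ → X_k` of epimorphisms of cycle sets with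
`|X_i| > |X_{i+1}| > 1` for `1 ≤ i ≤ k-1` and with `X_k` primitive. -/
def HasChain [Finite X] (C : CycleSet X) (k : ℕ) : Prop :=
  ∃ (T : ℕ → Type) (_ : ∀ i, Finite (T i)) (CS : ∀ i, CycleSet (T i)) (e : X → T 0),
    Function.Bijective e ∧ IsHom C (CS 0) e ∧
    (∀ i, i + 1 < k → Nat.card (T (i + 1)) < Nat.card (T i) ∧ 1 < Nat.card (T (i + 1))) ∧
    (∀ i, i + 1 < k → ∃ p : T i → T (i + 1),
      Function.Surjective p ∧ IsHom (CS i) (CS (i + 1)) p) ∧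
    (CS (k - 1)).Primitive

/-- `X` has finite primitive level: some chain as above exists (of positive length). -/
def HasFPL [Finite X] (C : CycleSet X) : Prop := ∃ k, 1 ≤ k ∧ HasChain C k

/-- `fpl(X) = k`: `k` is the largest positive integer admitting a chain as above. -/
def fplEq [Finite X] (C : CycleSet X) (k : ℕ) : Prop :=
  1 ≤ k ∧ HasChain C k ∧ ∀ m, 1 ≤ m → HasChain C m → m ≤ k

end CycleSet

open CycleSet

namespace CycleSet

/-! ### Epimorphisms, primitivity and chains -/

section Epimorphisms

variable {X Y : Type} {C : CycleSet X} {D : CycleSet Y} {f : X → Y}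

theorem sigma_apply (C : CycleSet X) (x y : X) : C.sigma x y = C.op x y := rfl

theorem sigma_mem (C : CycleSet X) (x : X) : C.sigma x ∈ C.G :=
  Subgroup.subset_closure ⟨x, rfl⟩

/-- A homomorphism `X → Y` is equivariant: each `g ∈ G(X)` has a companion in `G(Y)`. -/
theorem IsHom.exists_companion (hf : IsHom C D f) {g : Equiv.Perm X} (hg : g ∈ C.G) :
    ∃ g' ∈ D.G, ∀ x, f (g x) = g' (f x) := by
  induction hg using Subgroup.closure_induction with
  | mem g h =>
    obtain ⟨x, rfl⟩ := h
    exact ⟨D.sigma (f x), D.sigma_mem _, fun y => hf x y⟩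
  | one => exact ⟨1, one_mem _, fun _ => rfl⟩
  | mul g h _ _ ihg ihh =>
    obtain ⟨g', hg', h1⟩ := ihg
    obtain ⟨h', hh', h2⟩ := ihh
    exact ⟨g' * h', mul_mem hg' hh', fun x => by simp [h1, h2]⟩
  | inv g _ ih =>
    obtain ⟨g', hg', h1⟩ := ih
    refine ⟨g'⁻¹, inv_mem hg', fun x => ?_⟩
    rw [Equiv.Perm.eq_inv_iff_eq, ← h1]
    simp

theorem IsHom.indec (hf : IsHom C D f) (hs : Function.Surjective f) (hC : C.Indec) :
    D.Indec := by
  intro a b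
  obtain ⟨x, rfl⟩ := hs a
  obtain ⟨y, rfl⟩ := hs b
  obtain ⟨g, hg, rfl⟩ := hC x y
  obtain ⟨g', hg', h⟩ := hf.exists_companion hg
  exact ⟨g', hg', (h x).symm⟩

/-- All fibres of an epimorphism out of an indecomposable cycle set are equipotent, because
`G(X)` permutes them transitively; hence the size of the image divides the size of the source. -/
theorem IsHom.card_dvd [Finite X] (hf : IsHom C D f) (hs : Function.Surjective f)
    (hC : C.Indec) : Nat.card Y ∣ Nat.card X := by
  have : Finite Y := Finite.of_surjective f hs
  have hle : ∀ y z : Y, Nat.card {x // f x = y} ≤ Nat.card {x // f x = z} := by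
    intro y z
    obtain ⟨a, rfl⟩ := hs y
    obtain ⟨b, rfl⟩ := hs z
    obtain ⟨g, hg, rfl⟩ := hC a b
    obtain ⟨g', -, h⟩ := hf.exists_companion hg
    refine Nat.card_le_card_of_injective
      (fun x : {x // f x = f a} => (⟨g x.1, by rw [h, h, x.2]⟩ : {x // f x = f (g a)})) ?_
    intro x x' hx
    exact Subtype.ext (g.injective (congrArg Subtype.val hx))
  rcases isEmpty_or_nonempty Y with hY | ⟨⟨y⟩⟩
  · have : IsEmpty X := f.isEmpty
    simp
  · have : Fintype Y := Fintype.ofFinite Y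
    rw [← Nat.card_congr (Equiv.sigmaFiberEquiv f), Nat.card_sigma,
      Finset.sum_congr rfl fun z _ => le_antisymm (hle z y) (hle y z)]
    simp [Nat.card_eq_fintype_card]

/-- Blocks of a transitive group have size dividing the degree, so an indecomposable cycle set
of prime size is primitive. -/
theorem Indec.primitive (hC : C.Indec) (hp : (Nat.card X).Prime) : C.Primitive := by
  refine ⟨hC, fun s hs => ?_⟩
  have : Finite X := Nat.finite_of_card_ne_zero hp.ne_zero
  have : MulAction.IsPretransitive C.G X :=
    ⟨fun x y => let ⟨g, hg, h⟩ := hC x y; ⟨⟨g, hg⟩, h⟩⟩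
  have hpp := MulAction.IsPreprimitive.of_prime_card (G := C.G) hp
  have hb : MulAction.IsBlock C.G s := by
    rw [MulAction.isBlock_iff_smul_eq_or_disjoint]
    exact fun g => hs g g.2
  exact hpp.isTrivialBlock_of_isBlock hb

/-- Prolonging a chain by an epimorphism in front of it. -/
theorem HasChain.cons [Finite X] [Finite Y] (hf : IsHom C D f) (hs : Function.Surjective f)
    (h1 : 1 < Nat.card Y) (hlt : Nat.card Y < Nat.card X) {k : ℕ} (hk : 1 ≤ k)
    (h : HasChain D k) : HasChain C (k + 1) := by
  obtain ⟨T, hT, CS, e, he, hhom, hcard, hepi, hprim⟩ := h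
  obtain ⟨k, rfl⟩ : ∃ j, k = j + 1 := ⟨k - 1, by omega⟩
  have hc := Nat.card_congr (Equiv.ofBijective e he)
  refine ⟨fun i => Nat.casesOn i X T, ?_, fun i => Nat.casesOn i C CS, id,
    Function.bijective_id, fun _ _ => rfl, ?_, ?_, ?_⟩
  · rintro (_ | i)
    · assumption
    · exact hT i
  · rintro (_ | i) hi
    · exact hc ▸ ⟨hlt, h1⟩
    · exact hcard i (by omega)
  · rintro (_ | i) hi
    · exact ⟨e ∘ f, he.2.comp hs, fun a b => (congrArg e (hf a b)).trans (hhom _ _)⟩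
    · exact hepi i (by omega)
  · exact hprim

theorem HasChain.of_bijective [Finite X] [Finite Y] (hf : IsHom C D f)
    (hb : Function.Bijective f) {k : ℕ} (h : HasChain D k) : HasChain C k := by
  obtain ⟨T, hT, CS, e, he, hhom, hrest⟩ := h
  exact ⟨T, hT, CS, e ∘ f, he.comp hb, fun a b => by
        simp only [Function.comp]; rw [hf, hhom], hrest⟩

theorem hasChain_one [Finite X] (hC : C.Primitive) : HasChain C 1 :=
  ⟨fun _ => X, fun _ => inferInstance, fun _ => C, id, Function.bijective_id, fun _ _ => rfl,
    fun i hi => by omega, fun i hi => by omega, hC⟩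

open ArithmeticFunction in
/-- Along a chain the sizes are proper divisors of one another, so each step costs a prime
factor. -/
theorem HasChain.le_cardFactors [Finite X] (hC : C.Indec) (hX : 1 < Nat.card X) {m : ℕ}
    (hm : 1 ≤ m) (h : HasChain C m) : m ≤ cardFactors (Nat.card X) := by
  obtain ⟨T, hT, CS, e, he, hhom, hcard, hepi, -⟩ := h
  have key : ∀ i, i < m → (CS i).Indec ∧ 1 < Nat.card (T i) ∧
      cardFactors (Nat.card (T i)) + i ≤ cardFactors (Nat.card X) := by
    intro i
    induction i with
    | zero =>
      intro _
      rw [← Nat.card_congr (Equiv.ofBijective e he)]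
      exact ⟨hhom.indec he.2 hC, hX, le_rfl⟩
    | succ i ih =>
      intro hi
      obtain ⟨hI, h1, h2⟩ := ih (by omega)
      obtain ⟨hlt, hgt⟩ := hcard i hi
      obtain ⟨q, hq, hqh⟩ := hepi i hi
      refine ⟨hqh.indec hq hI, hgt, ?_⟩
      obtain ⟨c, hc⟩ := hqh.card_dvd hq hI
      have hc1 : 1 < c := by
        by_contra! hcc
        have := Nat.mul_le_mul_left (Nat.card (T (i + 1))) hcc
        omega
      have h3 := cardFactors_pos_iff_one_lt.2 hc1
      have h4 := cardFactors_mul (m := Nat.card (T (i + 1))) (n := c) (by omega) (by omega)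
      rw [← hc] at h4
      omega
  obtain ⟨-, h1, h2⟩ := key (m - 1) (by omega)
  have := cardFactors_pos_iff_one_lt.2 h1
  omega

end Epimorphisms

/-! ### Cycle sets of braces with finite cyclic additive group -/

section CyclicBraces

/-- The cycle set on `ℤ/N` attached to a brace with additive group `ℤ/N` and an element `β`.
The brace is encoded by `v`, where `v x` is the unit by which `λ_x` multiplies, so that
`x ∘ y = x + v x * y`; the hypothesis says that `λ` is multiplicative. The cycle set is given by
`σ_x⁻¹ y = λ_x(β) ∘ y`. -/
def ofUnits (N : ℕ) (v : ZMod N → (ZMod N)ˣ) (β : ZMod N)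
    (hv : ∀ x y, v (x + v x * y) = v x * v y) : CycleSet (ZMod N) :=
  -- the permutation `y ↦ x⁻¹ ∘ y`
  let inv (x y : ZMod N) : ZMod N := ((v x)⁻¹ : (ZMod N)ˣ) * (y - x)
  -- both sides of the cycle set identity are `z ↦ (v x * β + v y * β)⁻¹ ∘ z`
  have key : ∀ x y z, inv (v (inv (v x * β) y) * β) (inv (v x * β) z) =
      inv (v x * β + v y * β) z := by
    intro x y z
    set w := inv (v x * β) y with hw
    have hy : v y = v (v x * β) * v w := by
      rw [← hv, hw]; congr 1; simp [inv]
    have h2 : v (v x * β + v y * β) = v (v x * β) * v (v w * β) := by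
      rw [← hv, hy]; congr 1; push_cast; ring
    have h3 : ((v y : (ZMod N)ˣ) : ZMod N) = v (v x * β) * v w := by rw [hy]; push_cast; rfl
    simp only [inv, h2, mul_inv, Units.val_mul]
    rw [h3]
    have h4 := (v (v x * β)).inv_mul
    linear_combination (-(((v (v w * β))⁻¹ : (ZMod N)ˣ) : ZMod N) * v w * β) * (-h4)
  { op := fun x y => inv (v x * β) y
    bij := fun x => ⟨fun y z h => by simpa [inv] using h, fun y =>
      ⟨v x * β + v (v x * β) * y, by simp [inv]⟩⟩
    cyc := fun x y z => by rw [key, key, add_comm] }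

variable {N : ℕ} {v : ZMod N → (ZMod N)ˣ} {β : ZMod N}
  {hv : ∀ x y, v (x + v x * y) = v x * v y}

theorem ofUnits_op (x y : ZMod N) : (ofUnits N v β hv).op x y =
    ((v (v x * β))⁻¹ : (ZMod N)ˣ) * (y - v x * β) := rfl

/-- The socle `{h | v h = 1}` of a nonzero brace with finite cyclic additive group is nonzero:
the zero residue is not a unit, so `v` is not surjective onto `ℤ/N`, hence not injective. -/
theorem exists_ne_zero_of_units (hN : 1 < N) (hv : ∀ x y, v (x + v x * y) = v x * v y) :
    ∃ h : ZMod N, h ≠ 0 ∧ v h = 1 := by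
  have : NeZero N := ⟨by omega⟩
  have : Fact (1 < N) := ⟨hN⟩
  have hni : ¬ Function.Injective v := by
    intro hinj
    have : Function.Injective fun x => (v x : ZMod N) := Units.val_injective.comp hinj
    obtain ⟨x, hx⟩ := Finite.surjective_of_injective this 0
    exact (v x).ne_zero hx
  simp only [Function.Injective, not_forall] at hni
  obtain ⟨x, y, hxy, hne⟩ := hni
  refine ⟨((v x)⁻¹ : (ZMod N)ˣ) * (y - x), ?_, ?_⟩
  · simpa [sub_eq_zero] using fun h => hne h.symm
  · have := hv x (((v x)⁻¹ : (ZMod N)ˣ) * (y - x))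
    rw [Units.mul_inv_cancel_left, add_sub_cancel, ← hxy] at this
    exact (left_eq_mul.1 this)

/-- The socle contains the additive subgroup of some prime order `p`; that is, `v` has period
`M = N / p`. -/
theorem exists_prime_period (hN : 1 < N) (hv : ∀ x y, v (x + v x * y) = v x * v y) :
    ∃ M p : ℕ, p.Prime ∧ N = M * p ∧ ∀ x (k : ℤ), v (x + (M * k : ℤ)) = v x := by
  have : NeZero N := ⟨by omega⟩
  obtain ⟨h, h0, h1⟩ := exists_ne_zero_of_units hN hv
  have hper : ∀ x, v (x + h) = v x := fun x => by
    have := hv h x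
    rwa [h1, Units.val_one, one_mul, one_mul, add_comm] at this
  let K : AddSubgroup (ZMod N) :=
    { carrier := {z | ∀ x, v (x + z) = v x}
      zero_mem' := fun x => by simp
      add_mem' := fun {a b} ha hb x => by rw [← add_assoc, hb, ha]
      neg_mem' := fun {a} ha x => by
        have := ha (x + -a)
        rw [← this]; simp }
  have hK : h ∈ K := hper
  set t := Nat.gcd h.val N with ht
  have htN : t ∣ N := Nat.gcd_dvd_right _ _
  have hval : 0 < h.val := Nat.pos_of_ne_zero fun h' => h0 ((ZMod.val_eq_zero h).1 h')
  have htlt : t < N := (Nat.gcd_le_left _ hval).trans_lt h.val_lt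
  have htK : (t : ZMod N) ∈ K := by
    have hb := congrArg (Int.cast : ℤ → ZMod N) (Nat.gcd_eq_gcd_ab h.val N)
    push_cast at hb
    rw [ZMod.natCast_self, zero_mul, add_zero, ZMod.natCast_zmod_val] at hb
    rw [ht, hb, mul_comm, ← zsmul_eq_mul]
    exact K.zsmul_mem hK _
  obtain ⟨c, hc⟩ := htN
  have hc1 : c ≠ 1 := by rintro rfl; omega
  refine ⟨t * (c / c.minFac), c.minFac, Nat.minFac_prime hc1, ?_, fun x k => ?_⟩
  · rw [mul_assoc, Nat.div_mul_cancel c.minFac_dvd, hc]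
  · refine (?_ : _ ∈ K) x
    have : (((t * (c / c.minFac) : ℕ) * k : ℤ) : ZMod N) =
        (((c / c.minFac : ℕ) : ℤ) * k) • (t : ZMod N) := by
      rw [zsmul_eq_mul]; push_cast; ring
    rw [this]
    exact K.zsmul_mem htK _

/-- If `v` has period `M ∣ N`, the brace structure and its cycle set descend to `ℤ/M`. -/
theorem exists_quotient {M : ℕ} (hMN : M ∣ N)
    (hper : ∀ x (k : ℤ), v (x + (M * k : ℤ)) = v x) :
    ∃ (v' : ZMod M → (ZMod M)ˣ) (β' : ZMod M) (hv' : ∀ x y, v' (x + v' x * y) = v' x * v' y),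
      IsHom (ofUnits N v β hv) (ofUnits M v' β' hv') (ZMod.castHom hMN (ZMod M)) := by
  set f := ZMod.castHom hMN (ZMod M) with hf
  have hs : Function.Surjective f := ZMod.castHom_surjective hMN
  have hfv : ∀ x y, f x = f y → v x = v y := by
    intro x y hxy
    obtain ⟨z, hz⟩ := ZMod.intCast_surjective (x - y)
    have h0 : (z : ZMod M) = 0 := by
      rw [← map_intCast f, hz, map_sub, hxy, sub_self]
    obtain ⟨k, rfl⟩ := (ZMod.intCast_zmod_eq_zero_iff_dvd z M).1 h0
    rw [← hper y k, hz, add_sub_cancel]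
  let v' : ZMod M → (ZMod M)ˣ := fun y => Units.map f (v (Function.surjInv hs y))
  have hv'f : ∀ x, v' (f x) = Units.map f (v x) := fun x => by
    simp only [v']
    rw [hfv _ x (Function.surjInv_eq hs (f x))]
  have hv'c : ∀ x, (v' (f x) : ZMod M) = f (v x) := fun x => by rw [hv'f]; rfl
  refine ⟨v', f β, fun x y => ?_, fun x y => ?_⟩
  · obtain ⟨x, rfl⟩ := hs x
    obtain ⟨y, rfl⟩ := hs y
    rw [hv'c, ← map_mul, ← map_add, hv'f, hv'f, hv'f, hv, map_mul]
  · rw [ofUnits_op, ofUnits_op, hv'c, ← map_mul, hv'f, ← map_inv, map_mul, map_sub]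
    rfl

open ArithmeticFunction in
/-- Factoring out a subgroup of prime order of the socle, over and over, yields a chain whose
length is the number of prime factors of `N`. -/
theorem hasChain_ofUnits : ∀ (N : ℕ) [NeZero N] (_ : 1 < N) (v : ZMod N → (ZMod N)ˣ)
    (β : ZMod N) (hv : ∀ x y, v (x + v x * y) = v x * v y) (_ : (ofUnits N v β hv).Indec),
    HasChain (ofUnits N v β hv) (cardFactors N) := by
  intro N
  induction N using Nat.strong_induction_on with
  | _ N ih =>
  intro _ hN v β hv hI
  by_cases hp : N.Prime
  · rw [cardFactors_apply_prime hp]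
    exact hasChain_one (hI.primitive (by rwa [Nat.card_zmod]))
  · obtain ⟨M, p, hpp, hMp, hper⟩ := exists_prime_period hN hv
    have hM0 : M ≠ 0 := by rintro rfl; omega
    have hM1 : 1 < M := by
      have : M ≠ 1 := by rintro rfl; rw [one_mul] at hMp; exact hp (hMp ▸ hpp)
      omega
    have : NeZero M := ⟨hM0⟩
    have hlt : M < N := by
      have := Nat.mul_le_mul_left M hpp.two_le
      omega
    have hdvd : M ∣ N := ⟨p, hMp⟩
    obtain ⟨v', β', hv', hhom⟩ := exists_quotient (β := β) (hv := hv) hdvd hper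
    have hs : Function.Surjective (ZMod.castHom hdvd (ZMod M)) := ZMod.castHom_surjective hdvd
    have hΩ : cardFactors N = cardFactors M + 1 := by
      rw [hMp, cardFactors_mul hM0 hpp.ne_zero, cardFactors_apply_prime hpp]
    rw [hΩ]
    exact HasChain.cons hhom hs (by rwa [Nat.card_zmod]) (by simpa [Nat.card_zmod] using hlt)
      (cardFactors_pos_iff_one_lt.2 hM1) (ih M hlt hM1 v' β' hv' (hhom.indec hs hI))

end CyclicBraces

/-! ### Coordinates on the permutation brace -/

section Coordinates

/-- In a brace with additive group `ℤ/N`, every `λ_x` is additive, hence multiplication by a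
residue `v x`, which is a unit because `λ` is multiplicative. -/
theorem exists_units {N : ℕ} {B : Type*} [Group B] (φ : ZMod N ≃ B)
    (hφ : ∀ x y z, φ.symm (φ x * φ (y + z)) + x = φ.symm (φ x * φ y) + φ.symm (φ x * φ z)) :
    ∃ v : ZMod N → (ZMod N)ˣ, (∀ x y, φ (x + v x * y) = φ x * φ y) ∧
      ∀ x y, v (x + v x * y) = v x * v y := by
  let w : ZMod N → ZMod N := fun x => φ.symm (φ x * φ 1) - x
  have hw : ∀ x y, φ.symm (φ x * φ y) = x + w x * y := by
    intro x y
    let L : ZMod N →+ ZMod N := AddMonoidHom.mk' (fun y => φ.symm (φ x * φ y) - x) fun a b => by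
      linear_combination hφ x a b
    obtain ⟨k, rfl⟩ := ZMod.intCast_surjective y
    have : L ((k : ℤ) • (1 : ZMod N)) = k • L 1 := map_zsmul L k 1
    rw [zsmul_eq_mul, zsmul_eq_mul, mul_one] at this
    change φ.symm (φ x * φ k) - x = k * w x at this
    linear_combination this
  have hmul : ∀ x y, φ (x + w x * y) = φ x * φ y := fun x y => by
    rw [← hw, Equiv.apply_symm_apply]
  have hww : ∀ x y, w (x + w x * y) = w x * w y := by
    intro x y
    have h1 : (x + w x * y) + w (x + w x * y) * 1 = x + w x * (y + w y * 1) :=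
      φ.injective (by rw [hmul, hmul, hmul, hmul, mul_assoc])
    linear_combination h1
  have h1 : φ 0 = 1 := by
    have h := hmul (φ.symm 1) 0
    rw [mul_zero, add_zero, Equiv.apply_symm_apply, one_mul] at h
    exact h.symm
  have hw0 : w 0 = 1 := by simp [w, h1]
  have hunit : ∀ x, IsUnit (w x) := fun x => by
    have h : x + w x * φ.symm (φ x)⁻¹ = 0 := φ.injective (by rw [hmul]; simp [h1])
    refine IsUnit.of_mul_eq_one (w (φ.symm (φ x)⁻¹)) ?_
    rw [← hww, h, hw0]
  refine ⟨fun x => (hunit x).unit, fun x y => hmul x y, fun x y => Units.ext ?_⟩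
  exact hww x y

variable {X : Type} {C : CycleSet X} {N : ℕ} {v : ZMod N → (ZMod N)ˣ}

/-- `G(X)` acts regularly on `X` when its additive group is `ℤ/N`: the generator `σ_{x₀}⁻¹` of
the brace generates `ℤ/N` additively, so the stabiliser of `x₀` lies in the socle; its additive
subgroups are normal, and the stabiliser is core-free. Transporting the cycle set along
`g ↦ g x₀` then gives `ofUnits`. -/
theorem exists_ofUnits [NeZero N] (hC : C.Indec) (x₀ : X) (φ : ZMod N ≃ C.G)
    (hφ : ∀ x y, φ (x + v x * y) = φ x * φ y) (hv : ∀ x y, v (x + v x * y) = v x * v y)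
    (hmem : ∀ x : X, (C.sigma x)⁻¹ ∈ C.G)
    (hlam : ∀ g x, v g * φ.symm ⟨(C.sigma x)⁻¹, hmem x⟩ =
      φ.symm ⟨(C.sigma ((φ g : Equiv.Perm X) x))⁻¹, hmem _⟩) :
    ∃ (β : ZMod N) (f : ZMod N → X), Function.Bijective f ∧ IsHom (ofUnits N v β hv) C f := by
  set β := φ.symm ⟨(C.sigma x₀)⁻¹, hmem x₀⟩ with hβ
  let f : ZMod N → X := fun z => (φ z : Equiv.Perm X) x₀
  have hφc : ∀ x y, (φ (x + v x * y) : Equiv.Perm X) = φ x * φ y := fun x y => by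
    rw [hφ]; rfl
  have hs : Function.Surjective f := fun x => by
    obtain ⟨g, hg, h⟩ := hC x₀ x
    exact ⟨φ.symm ⟨g, hg⟩, by simpa [f] using h⟩
  have hb : ∀ z, (φ (v z * β) : Equiv.Perm X) = (C.sigma (f z))⁻¹ := fun z => by
    rw [hβ, hlam, Equiv.apply_symm_apply]
  have h0 : φ 0 = 1 := by
    have h := hφ 0 0
    rw [mul_zero, add_zero] at h
    exact left_eq_mul.1 h
  have hv0 : v 0 = 1 := by
    have h := hv 0 0
    rw [mul_zero, add_zero] at h
    exact left_eq_mul.1 h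
  -- the multiples of `β` are closed under `∘` and inversion, and contain every `σ_x⁻¹`
  have hβu : ∀ g ∈ C.G, ∃ z, (φ (z * β) : Equiv.Perm X) = g := by
    intro g hg
    have hinv : ∀ g : Equiv.Perm X, (∃ z, (φ (z * β) : Equiv.Perm X) = g) →
        ∃ z, (φ (z * β) : Equiv.Perm X) = g⁻¹ := by
      rintro g ⟨z, rfl⟩
      refine ⟨-((v (z * β))⁻¹ : (ZMod N)ˣ) * z, ?_⟩
      rw [eq_inv_iff_mul_eq_one, mul_eq_one_iff_inv_eq', inv_eq_iff_mul_eq_one, ← hφc]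
      have : z * β + v (z * β) * (-((v (z * β))⁻¹ : (ZMod N)ˣ) * z * β) = 0 := by
        linear_combination (-z * β) * (v (z * β)).mul_inv
      rw [this, h0]; rfl
    induction hg using Subgroup.closure_induction with
    | mem g h =>
      obtain ⟨x, rfl⟩ := h
      obtain ⟨z, rfl⟩ := hs x
      rw [← inv_inv (C.sigma (f z))]
      exact hinv _ ⟨v z, hb z⟩
    | one => exact ⟨0, by rw [zero_mul, h0]; rfl⟩
    | mul g h _ _ ihg ihh =>
      obtain ⟨y, rfl⟩ := ihg
      obtain ⟨z, rfl⟩ := ihh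
      refine ⟨y + v (y * β) * z, ?_⟩
      rw [← hφc]; congr 3; ring
    | inv g _ ih => exact hinv g ih
  -- some multiple of `β` corresponds to `φ 1`, so `β` is a unit
  obtain ⟨γ, hγ⟩ : ∃ γ, γ * β = 1 := by
    obtain ⟨γ, h⟩ := hβu _ (φ 1).2
    exact ⟨γ, φ.injective (Subtype.ext h)⟩
  -- `f` determines `σ⁻¹`, that is `v z * β`, and hence `v z`
  have hfv : ∀ y z, f y = f z → v y = v z := by
    intro y z h
    have h1 : (v y : ZMod N) * β = v z * β :=
      φ.injective (Subtype.ext (by rw [hb, hb, h]))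
    exact Units.ext (by linear_combination γ * h1 + (v z - v y : ZMod N) * hγ)
  have hf0 : f 0 = x₀ := by simp [f, h0]
  have hstab : ∀ z, f z = x₀ → z = 0 := by
    intro z hz
    have hvz : v z = 1 := by rw [hfv z 0 (hz.trans hf0.symm), hv0]
    have hmulz : ∀ k : ℕ, f (k * z) = x₀ := by
      intro k
      induction k with
      | zero => simpa using hf0
      | succ k ih =>
        have h := hφc z (k * z)
        rw [hvz, Units.val_one, one_mul] at h
        have e : ((k + 1 : ℕ) : ZMod N) * z = z + k * z := by push_cast; ring
        simp only [f] at ih hz ⊢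
        rw [e, h, Equiv.Perm.mul_apply, ih, hz]
    -- conjugates of `z` are additive multiples of `z`, which fix `x₀`
    have hfix : φ z = 1 := by
      refine Subtype.ext (Equiv.ext fun x => ?_)
      obtain ⟨y, rfl⟩ := hs x
      obtain ⟨k, hk⟩ : ∃ k : ℕ, (k : ZMod N) = ((v y)⁻¹ : (ZMod N)ˣ) :=
        ⟨_, ZMod.natCast_zmod_val _⟩
      have e : z + v z * y = y + v y * (k * z) := by
        rw [hvz, hk]; simp [add_comm]
      change (φ z : Equiv.Perm X) ((φ y : Equiv.Perm X) x₀) = (φ y : Equiv.Perm X) x₀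
      rw [← Equiv.Perm.mul_apply, ← hφc, e, hφc, Equiv.Perm.mul_apply]
      exact congrArg _ (hmulz k)
    exact φ.injective (hfix.trans h0.symm)
  refine ⟨β, f, ⟨fun y z h => ?_, hs⟩, fun y z => ?_⟩
  · have e : y = z + v z * (((v z)⁻¹ : (ZMod N)ˣ) * (y - z)) := by simp
    have h1 : f (((v z)⁻¹ : (ZMod N)ˣ) * (y - z)) = x₀ := by
      have h2 := hφc z (((v z)⁻¹ : (ZMod N)ˣ) * (y - z))
      rw [← e] at h2
      simp only [f] at h ⊢
      rw [h2, Equiv.Perm.mul_apply] at h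
      exact (φ z : Equiv.Perm X).injective (by simpa using h)
    have h3 := hstab _ h1
    rw [h3, mul_zero, add_zero] at e
    exact e
  · have e : z = v y * β + v (v y * β) * (ofUnits N v β hv).op y z := by simp [ofUnits_op]
    have h := hφc (v y * β) ((ofUnits N v β hv).op y z)
    rw [← e, hb] at h
    have h' : f z = (C.sigma (f y))⁻¹ (f ((ofUnits N v β hv).op y z)) := by
      simp only [f] at h ⊢
      rw [h]; rfl
    rw [Equiv.Perm.eq_inv_iff_eq] at h'
    exact h'.symm

end Coordinates

end CycleSet

theorem statement_7 {X : Type} [Finite X] (C : CycleSet X)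
    (hnd : C.Nondeg) (hind : C.Indec)
    (n : ℕ) (p : Fin n → ℕ) (a : Fin n → ℕ)
    (hp : ∀ i, (p i).Prime) (hinj : Function.Injective p)
    (ha : 1 ≤ ∑ i, a i)
    (hcard : Nat.card X = ∏ i, p i ^ a i)
    -- the permutation left brace structure on `G(X)`:
    (A : AddCommGroup ↥C.G)
    (hbrace : ∀ g h k : ↥C.G, A.add (g * A.add h k) g = A.add (g * h) (g * k))
    (hmem : ∀ x : X, (C.sigma x)⁻¹ ∈ C.G)
    (hlambda : ∀ (g : ↥C.G) (x : X),
      A.add (A.neg g) (g * ⟨(C.sigma x)⁻¹, hmem x⟩) =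
        ⟨(C.sigma ((g : Equiv.Perm X) x))⁻¹, hmem ((g : Equiv.Perm X) x)⟩)
    -- the additive group of the brace is cyclic:
    (hcyclic : ∃ g : ↥C.G, ∀ h : ↥C.G, h ∈ @AddSubgroup.zmultiples _ A.toAddGroup g) :
    fplEq C (∑ i, a i) := by
  have hΩ : ArithmeticFunction.cardFactors (Nat.card X) = ∑ i, a i := by
    rw [hcard]
    have key : ∀ s : Finset (Fin n),
        ArithmeticFunction.cardFactors (∏ i ∈ s, p i ^ a i) = ∑ i ∈ s, a i := by
      intro s
      induction s using Finset.cons_induction with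
      | empty => simp
      | cons i s hi ih =>
        rw [Finset.prod_cons, Finset.sum_cons, ArithmeticFunction.cardFactors_mul
          (pow_ne_zero _ (hp i).ne_zero)
          (Finset.prod_ne_zero_iff.2 fun j _ => pow_ne_zero _ (hp j).ne_zero), ih,
          ArithmeticFunction.cardFactors_apply_prime_pow (hp i)]
    exact key _
  have hX : 1 < Nat.card X :=
    ArithmeticFunction.cardFactors_pos_iff_one_lt.1 (by rw [hΩ]; exact ha)
  have hX0 : Nonempty X := (Nat.card_pos_iff.1 (by omega)).1
  obtain ⟨x₀⟩ := hX0
  have hcyc : IsAddCyclic C.G := by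
    obtain ⟨g, hg⟩ := hcyclic
    exact ⟨g, hg⟩
  have : NeZero (Nat.card C.G) := ⟨Nat.card_pos.ne'⟩
  let φ := @zmodAddCyclicAddEquiv C.G A.toAddGroup hcyc
  have hadd : ∀ x y, φ.symm (A.add x y) = φ.symm x + φ.symm y := fun x y => φ.symm.map_add x y
  have hneg : ∀ x, φ.symm (A.neg x) = - φ.symm x := fun x => by
    exact map_neg φ.symm x
  have hadd' : ∀ x y, φ (x + y) = A.add (φ x) (φ y) := fun x y => φ.map_add x y
  obtain ⟨v, hφ, hv⟩ := exists_units φ.toEquiv (fun x y z => by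
    have h := congrArg φ.symm (hbrace (φ x) (φ y) (φ z))
    rw [hadd, hadd, ← hadd'] at h
    simpa using h)
  obtain ⟨β, f, hf, hhom⟩ := exists_ofUnits hind x₀ φ.toEquiv hφ hv hmem (fun g x => by
    have h := congrArg φ.symm (hlambda (φ g) x)
    have h2 := hφ g (φ.symm ⟨(C.sigma x)⁻¹, hmem x⟩)
    have h3 : φ g * ⟨(C.sigma x)⁻¹, hmem x⟩ = φ (g + v g * φ.symm ⟨(C.sigma x)⁻¹, hmem x⟩) :=
      by rw [show φ (g + _) = _ from h2]; simp
    rw [hadd, hneg, h3] at h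
    simpa using h)
  have hcardG : Nat.card C.G = Nat.card X := by
    rw [← Nat.card_congr (Equiv.ofBijective f hf), Nat.card_zmod]
  let e := Equiv.ofBijective f hf
  have hhom' : IsHom C (ofUnits _ v β hv) e.symm := fun x y => by
    apply e.injective
    rw [Equiv.apply_symm_apply]
    change _ = f _
    rw [hhom]
    change _ = C.op (e _) (e _)
    simp
  refine ⟨ha, ?_, fun m hm h => hΩ ▸ h.le_cardFactors hind hX hm⟩
  have h := hasChain_ofUnits _ (by rwa [hcardG]) v β hv (hhom'.indec e.symm.surjective hind)
  rw [← hΩ, ← hcardG]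
  exact h.of_bijective hhom' e.symm.bijective
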